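/- For every pure strategy s_I of Player I in the binary Gale–Stewart game, dim_H(⟦s_I⟧) = 1/2; likewise, for every pure strategy s_II of Player II, dim_H(⟦s_II⟧) = 1/2. -/

import Mathlib

open Metric Set Filter MeasureTheory

noncomputable local instance : MetricSpace (ℕ → Bool) := PiNat.metricSpace

/-- The finite prefix `⟨x 0, …, x (n-1)⟩` of a play. -/
def prefixList (x : ℕ → Bool) (n : ℕ) : List Bool := List.ofFn fun i : Fin n => x i

/-- `x` is a play consistent with the Player I pure strategy `sI`. -/
def ConsistentI (sI : List Bool → Bool) (x : ℕ → Bool) : Prop :=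
  ∀ n : ℕ, Even n → x n = sI (prefixList x n)

/-- `x` is a play consistent with the Player II pure strategy `sII`. -/
def ConsistentII (sII : List Bool → Bool) (x : ℕ → Bool) : Prop :=
  ∀ n : ℕ, Odd n → x n = sII (prefixList x n)

open scoped NNReal ENNReal

/-- The plays in which every move at a position whose parity differs from that of `c` is dictated
by `s`. -/
def playsFreeAt (c : ℕ) (s : List Bool → Bool) : Set (ℕ → Bool) :=
  {x | ∀ n, n % 2 ≠ c → x n = s (prefixList x n)}

theorem prefixList_succ (x : ℕ → Bool) (n : ℕ) :
    prefixList x (n + 1) = prefixList x n ++ [x n] := by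
  simp only [prefixList, List.ofFn_succ_last, Fin.val_castSucc, Fin.val_last]

theorem prefixList_congr {x y : ℕ → Bool} {n : ℕ} (h : ∀ i < n, x i = y i) :
    prefixList x n = prefixList y n := by
  simp only [prefixList]
  congr 1
  funext i
  exact h i i.2

/-- Plays following the same strategy and sharing their first `n` free moves agree on the first
`2 * n` positions. -/
theorem eq_of_free_moves_eq {c : ℕ} {s : List Bool → Bool} {x y : ℕ → Bool}
    (hx : x ∈ playsFreeAt c s) (hy : y ∈ playsFreeAt c s) {n : ℕ}
    (h : ∀ i < n, x (2 * i + c) = y (2 * i + c)) : ∀ k < 2 * n, x k = y k := by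
  intro k
  induction k using Nat.strong_induction_on with
  | _ k ih =>
    intro hk
    by_cases hc : k % 2 = c
    · have hkc : k = 2 * (k / 2) + c := by omega
      rw [hkc]
      exact h _ (by omega)
    · rw [hx k hc, hy k hc, prefixList_congr fun i hi => ih i hi (by omega)]

/-- The first `n` moves of the play following `s` whose free moves are given by `w`. -/
def playPrefix (c : ℕ) (s : List Bool → Bool) (w : ℕ → Bool) : ℕ → List Bool
  | 0 => []
  | n + 1 => playPrefix c s w n ++ [if n % 2 = c then w (n / 2) else s (playPrefix c s w n)]

theorem exists_play_of_free_moves {c : ℕ} (hc : c < 2) (s : List Bool → Bool) (w : ℕ → Bool) :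
    ∃ x ∈ playsFreeAt c s, ∀ i, x (2 * i + c) = w i := by
  let x : ℕ → Bool := fun n => if n % 2 = c then w (n / 2) else s (playPrefix c s w n)
  have hx : ∀ n, prefixList x n = playPrefix c s w n := by
    intro n
    induction n with
    | zero => simp [prefixList, playPrefix]
    | succ n ih => rw [prefixList_succ, ih, playPrefix]
  refine ⟨x, fun n hn => ?_, fun i => ?_⟩
  · rw [hx]
    exact if_neg hn
  · have h₁ : (2 * i + c) % 2 = c := by omega
    have h₂ : (2 * i + c) / 2 = i := by omega
    simp [x, h₁, h₂]

/-- The real number in `[0, 1]` whose binary digits are the free moves of a play. -/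
noncomputable def freeMovesReal (c : ℕ) (x : ℕ → Bool) : ℝ :=
  Real.ofDigits (b := 2) fun i => if x (2 * i + c) then 1 else 0

theorem dist_freeMovesReal_le {c : ℕ} (hc : c < 2) (x y : ℕ → Bool) :
    dist (freeMovesReal c x) (freeMovesReal c y) ≤ 2 * dist x y ^ (1 / 2 : ℝ) := by
  rcases eq_or_ne x y with rfl | hxy
  · simp
  set m := PiNat.firstDiff x y
  have hd : dist x y = (1 / 2 : ℝ) ^ m := PiNat.dist_eq_of_ne hxy
  have hle : dist (freeMovesReal c x) (freeMovesReal c y) ≤ (((2 : ℕ) : ℝ) ^ (m / 2))⁻¹ := by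
    refine Real.abs_ofDigits_sub_ofDigits_le fun i hi => ?_
    rw [PiNat.apply_eq_of_lt_firstDiff (x := x) (y := y) (n := 2 * i + c) (by omega)]
  refine hle.trans ?_
  rw [hd, ← Real.sqrt_eq_rpow]
  refine (sq_le_sq₀ (by positivity) (by positivity)).1 ?_
  rw [mul_pow, Real.sq_sqrt (by positivity)]
  have hpow : (1 / 2 : ℝ) ^ (2 * (m / 2) + 2) ≤ (1 / 2) ^ m :=
    pow_le_pow_of_le_one (by norm_num) (by norm_num) (by omega)
  calc ((((2 : ℕ) : ℝ) ^ (m / 2))⁻¹) ^ 2 = 2 ^ 2 * (1 / 2 : ℝ) ^ (2 * (m / 2) + 2) := by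
        rw [pow_add, pow_mul', one_div, inv_pow 2 (m / 2)]
        push_cast
        ring
    _ ≤ 2 ^ 2 * (1 / 2) ^ m := by gcongr

theorem holderWith_freeMovesReal {c : ℕ} (hc : c < 2) :
    HolderWith 2 (1 / 2) (freeMovesReal c) := by
  intro x y
  rw [edist_dist, edist_dist, ENNReal.ofReal_rpow_of_nonneg dist_nonneg (by positivity)]
  refine (ENNReal.ofReal_le_ofReal (dist_freeMovesReal_le hc x y)).trans_eq ?_
  rw [ENNReal.ofReal_mul (by norm_num)]
  simp

theorem Icc_subset_image_freeMovesReal {c : ℕ} (hc : c < 2) (s : List Bool → Bool) :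
    Icc 0 1 ⊆ freeMovesReal c '' playsFreeAt c s := by
  intro r hr
  obtain ⟨d, -, rfl⟩ := Real.ofDigits_SurjOn one_lt_two hr
  obtain ⟨x, hx, hxd⟩ := exists_play_of_free_moves hc s fun i => decide (d i = 1)
  refine ⟨x, hx, congrArg Real.ofDigits (funext fun i => ?_)⟩
  rw [hxd]
  generalize d i = a
  fin_cases a <;> rfl

theorem half_le_dimH_playsFreeAt {c : ℕ} (hc : c < 2) (s : List Bool → Bool) :
    1 / 2 ≤ dimH (playsFreeAt c s) := by
  have hIcc : dimH (Icc (0 : ℝ) 1) = 1 := by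
    rw [Real.dimH_of_nonempty_interior (by simp)]
    simp
  have h := (dimH_mono (Icc_subset_image_freeMovesReal hc s)).trans
    ((holderWith_freeMovesReal hc).dimH_image_le (by norm_num) _)
  rw [hIcc, ENNReal.le_div_iff_mul_le (by simp) (by simp)] at h
  simpa using h

theorem ediam_plays_of_free_moves_le (c : ℕ) (s : List Bool → Bool) (n : ℕ) (w : Fin n → Bool) :
    ediam {x ∈ playsFreeAt c s | ∀ i : Fin n, x (2 * i + c) = w i} ≤ 2⁻¹ ^ (2 * n) := by
  refine ediam_le fun x hx y hy => ?_
  have hdist : dist x y ≤ (1 / 2 : ℝ) ^ (2 * n) := by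
    rw [← PiNat.mem_cylinder_iff_dist_le, PiNat.mem_cylinder_iff]
    exact eq_of_free_moves_eq hx.1 hy.1 fun i hi =>
      (hx.2 ⟨i, hi⟩).trans (hy.2 ⟨i, hi⟩).symm
  rw [edist_dist]
  refine (ENNReal.ofReal_le_ofReal hdist).trans_eq ?_
  rw [ENNReal.ofReal_pow (by norm_num), one_div, ENNReal.ofReal_inv_of_pos two_pos]
  simp

theorem dimH_playsFreeAt_le_half (c : ℕ) (s : List Bool → Bool) :
    dimH (playsFreeAt c s) ≤ 1 / 2 := by
  borelize (ℕ → Bool)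
  have hμ : μH[(1 / 2 : ℝ)] (playsFreeAt c s) ≤ 1 := by
    refine (Measure.hausdorffMeasure_le_liminf_sum (1 / 2 : ℝ) (playsFreeAt c s) (l := atTop)
      (fun n : ℕ => (2⁻¹ : ℝ≥0∞) ^ (2 * n)) ?_
      (fun n (w : Fin n → Bool) => {x ∈ playsFreeAt c s | ∀ i : Fin n, x (2 * i + c) = w i})
      (Eventually.of_forall fun n w => ediam_plays_of_free_moves_le c s n w)
      (Eventually.of_forall fun n x hx => ?_)).trans ?_
    · exact (ENNReal.tendsto_pow_atTop_nhds_zero_of_lt_one (by simp)).comp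
        (tendsto_id.const_mul_atTop' two_pos)
    · exact mem_iUnion.2 ⟨fun i => x (2 * i + c), hx, fun _ => rfl⟩
    · refine (liminf_le_liminf (Eventually.of_forall fun n =>
        (?_ : _ ≤ (1 : ℝ≥0∞)))).trans_eq (liminf_const 1)
      calc ∑ w : Fin n → Bool,
            ediam {x ∈ playsFreeAt c s | ∀ i : Fin n, x (2 * i + c) = w i} ^ (1 / 2 : ℝ)
          ≤ ∑ _w : Fin n → Bool, ((2⁻¹ : ℝ≥0∞) ^ (2 * n)) ^ (1 / 2 : ℝ) := by
            gcongr with w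
            exact ediam_plays_of_free_moves_le c s n w
        _ = 2 ^ n * 2⁻¹ ^ n := by
            rw [pow_mul', ← ENNReal.rpow_natCast _ 2, ← ENNReal.rpow_mul]
            simp
        _ = 1 := by
            rw [← mul_pow, ENNReal.mul_inv_cancel (by simp) (by simp), one_pow]
  have hdim : dimH (playsFreeAt c s) ≤ ((1 / 2 : ℝ≥0) : ℝ≥0∞) :=
    dimH_le_of_hausdorffMeasure_ne_top (by simpa using ne_top_of_le_ne_top ENNReal.one_ne_top hμ)
  simpa using hdim

theorem dimH_playsFreeAt {c : ℕ} (hc : c < 2) (s : List Bool → Bool) :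
    dimH (playsFreeAt c s) = 1 / 2 :=
  (dimH_playsFreeAt_le_half c s).antisymm (half_le_dimH_playsFreeAt hc s)

/-- For every pure strategy of either player in the binary Gale–Stewart game, the set of
plays consistent with it has Hausdorff dimension `1/2`. -/
theorem dimH_plays_of_strategy :
    (∀ sI : List Bool → Bool, dimH {x : ℕ → Bool | ConsistentI sI x} = 1 / 2) ∧
    (∀ sII : List Bool → Bool, dimH {x : ℕ → Bool | ConsistentII sII x} = 1 / 2) := by
  refine ⟨fun s => ?_, fun s => ?_⟩
  · rw [← dimH_playsFreeAt one_lt_two s]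
    simp [playsFreeAt, ConsistentI, Nat.even_iff]
  · rw [← dimH_playsFreeAt two_pos s]
    simp [playsFreeAt, ConsistentII, Nat.odd_iff]
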